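/- In Case (A) (s = +1) the amplitudes vanish pointwise: for every x ∈ ℤ₊, lim_{t→∞} Ψ_t^L(x) = 0 and lim_{t→∞} Ψ_t^R(x) = 0. -/

import Mathlib

/-!
Decomposing the walk at its last visit to each vertex expresses every amplitude through one power
series `U`, that of the excursions away from a vertex: `b U² = (1 - X²) U + b X²`. The returns to
the origin have the generating function `1 / (1 - U)`, and
`2 (1 - b) (1 - X²) / (1 - U) = D - X² - (2 b - 1)` with `D = √(1 - 2 (1 - 2 b²) X² + X⁴)`.
The series `D` has absolutely summable coefficients (it is a product of two square roots of linear
polynomials in `X²`, whose coefficients are Catalan numbers times powers of a number of modulus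
`1 / 4`), and its value at `±1` is `2 b` because `0 ≤ b`. So the right-hand side vanishes at `±1`,
which cancels the poles of `1 / (1 - X²)`: the amplitudes at the origin are partial sums of an
absolutely convergent series with sum zero. The recursion carries the limit to all other vertices.
-/

open Filter Topology

noncomputable section

/-- Half-line quantum walk `Ψ_t(x) = (Ψ_t^L(x), Ψ_t^R(x))` with a reflecting wall at the
origin, coin parameters `a`, `b` and wall sign `s`:
`Ψ_0(0) = (1,0)`, `Ψ_0(x) = (0,0)` for `x ≥ 1`, and
`Ψ_{t+1}^L(x) = a·Ψ_t^L(x+1) − b·Ψ_t^R(x+1)`,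
`Ψ_{t+1}^R(x) = b·Ψ_t^L(x−1) + a·Ψ_t^R(x−1)` for `x ≥ 2`,
`Ψ_{t+1}^R(1) = s·Ψ_t^L(0)`, `Ψ_{t+1}^R(0) = 0`. -/
noncomputable def psi (a b s : ℝ) : ℕ → ℕ → ℂ × ℂ
  | 0, x => if x = 0 then (1, 0) else (0, 0)
  | t + 1, x =>
      ((a : ℂ) * (psi a b s t (x + 1)).1 - (b : ℂ) * (psi a b s t (x + 1)).2,
       if x = 0 then 0
       else if x = 1 then (s : ℂ) * (psi a b s t 0).1
       else (b : ℂ) * (psi a b s t (x - 1)).1 + (a : ℂ) * (psi a b s t (x - 1)).2)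

/-- Position distribution `P(X_t = x) = |Ψ_t^L(x)|² + |Ψ_t^R(x)|²`. -/
noncomputable def prob (a b s : ℝ) (t x : ℕ) : ℝ :=
  ‖(psi a b s t x).1‖ ^ 2 + ‖(psi a b s t x).2‖ ^ 2

open PowerSeries

section AbsolutelySummable

variable {A : Type*} [NormedRing A]

/-- The coefficients of `P` are absolutely summable with sum `v`. Such series, the Wiener algebra,
are the power series that may be evaluated on the closed unit disc; `v` is the value at `1`. -/
def HasValueAtOne (P : A⟦X⟧) (v : A) : Prop :=
  Summable (fun n => ‖coeff n P‖) ∧ HasSum (fun n => coeff n P) v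

theorem HasValueAtOne.unique {P : A⟦X⟧} {u v : A} (hu : HasValueAtOne P u)
    (hv : HasValueAtOne P v) : u = v :=
  hu.2.unique hv.2

theorem hasValueAtOne_monomial (n : ℕ) (r : A) : HasValueAtOne (monomial n r) r := by
  have coeff_eq_zero : ∀ k ≠ n, coeff k (monomial n r) = 0 := fun k hk => by
    rw [coeff_monomial, if_neg hk]
  refine ⟨(hasSum_single n fun k hk => by rw [coeff_eq_zero k hk, norm_zero]).summable, ?_⟩
  simpa using hasSum_single n coeff_eq_zero

theorem hasValueAtOne_C (r : A) : HasValueAtOne (C r) r := by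
  simpa using hasValueAtOne_monomial 0 r

theorem hasValueAtOne_one : HasValueAtOne (1 : A⟦X⟧) 1 := by
  simpa using hasValueAtOne_C (1 : A)

theorem hasValueAtOne_X : HasValueAtOne (X : A⟦X⟧) 1 :=
  hasValueAtOne_monomial 1 1

theorem HasValueAtOne.sub {P Q : A⟦X⟧} {u v : A} (hP : HasValueAtOne P u)
    (hQ : HasValueAtOne Q v) : HasValueAtOne (P - Q) (u - v) := by
  refine ⟨(hP.1.add hQ.1).of_nonneg_of_le (fun _ => norm_nonneg _) fun n => ?_, ?_⟩
  · simpa only [map_sub] using norm_sub_le (coeff n P) (coeff n Q)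
  · simpa only [map_sub] using hP.2.sub hQ.2

theorem HasValueAtOne.mul [CompleteSpace A] {P Q : A⟦X⟧} {u v : A} (hP : HasValueAtOne P u)
    (hQ : HasValueAtOne Q v) : HasValueAtOne (P * Q) (u * v) := by
  have summable_norm := summable_norm_sum_mul_antidiagonal_of_summable_norm hP.1 hQ.1
  have tsum_eq := tsum_mul_tsum_eq_tsum_sum_antidiagonal_of_summable_norm hP.1 hQ.1
  rw [hP.2.tsum_eq, hQ.2.tsum_eq] at tsum_eq
  refine ⟨?_, ?_⟩
  · simpa only [coeff_mul] using summable_norm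
  · simpa only [coeff_mul, tsum_eq] using summable_norm.of_norm.hasSum

theorem HasValueAtOne.map_conj {P : ℂ⟦X⟧} {v : ℂ} (hP : HasValueAtOne P v) :
    HasValueAtOne (P.map (starRingEnd ℂ)) (starRingEnd ℂ v) := by
  refine ⟨?_, ?_⟩
  · simpa only [coeff_map, RCLike.norm_conj] using hP.1
  · simpa only [coeff_map] using Complex.hasSum_conj'.mpr hP.2

end AbsolutelySummable

theorem coeff_mul_mk_one {A : Type*} [Semiring A] (R : A⟦X⟧) (n : ℕ) :
    coeff n (R * mk 1) = ∑ k ∈ Finset.range (n + 1), coeff k R := by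
  simp [coeff_mul, Finset.Nat.sum_antidiagonal_eq_sum_range_succ_mk]

theorem tendsto_coeff_expand {A : Type*} [CommRing A] [TopologicalSpace A] {p : ℕ}
    (hp : p ≠ 0) {P : A⟦X⟧} (hP : Tendsto (fun n => coeff n P) atTop (𝓝 0)) :
    Tendsto (fun n => coeff n (expand p hp P)) atTop (𝓝 0) := by
  have tendsto_div := hP.comp (Nat.tendsto_div_const_atTop hp)
  refine (tendsto_div.if' (p := fun n => p ∣ n) tendsto_const_nhds).congr fun n => ?_
  simp [coeff_expand]

/-- Since `H = expand p (R / (1 - X))`, the coefficients of `H` are the partial sums of those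
of `R`. -/
theorem tendsto_coeff_of_one_sub_X_pow_mul_eq_expand {A : Type*} [NormedCommRing A] {p : ℕ}
    (hp : p ≠ 0) {H R : A⟦X⟧} (hH : (1 - X ^ p) * H = expand p hp R) (hR : HasValueAtOne R 0) :
    Tendsto (fun n => coeff n H) atTop (𝓝 0) := by
  have expand_geom : expand p hp (mk 1 : A⟦X⟧) * (1 - X ^ p) = 1 := by
    simpa using congrArg (expand p hp) (mk_one_mul_one_sub_eq_one A)
  have H_eq : H = expand p hp (R * mk (1 : ℕ → A)) := by
    rw [map_mul]
    linear_combination expand p hp (mk 1) * hH - H * expand_geom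
  rw [H_eq]
  apply tendsto_coeff_expand hp
  simpa only [coeff_mul_mk_one] using (tendsto_add_atTop_iff_nat 1).mpr hR.2.tendsto_sum_nat

theorem catalan_div_four_pow (n : ℕ) :
    (catalan n : ℝ) / 4 ^ n =
      2 * (n.centralBinom / 4 ^ n - (n + 1).centralBinom / 4 ^ (n + 1)) := by
  have catalan_eq : ((n : ℝ) + 1) * catalan n = n.centralBinom := by
    exact_mod_cast succ_mul_catalan_eq_centralBinom n
  have centralBinom_succ : ((n : ℝ) + 1) * (n + 1).centralBinom
      = 2 * (2 * n + 1) * n.centralBinom := by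
    exact_mod_cast n.succ_mul_centralBinom_succ
  have succ_ne_zero : (n : ℝ) + 1 ≠ 0 := by positivity
  rw [pow_succ]
  field_simp
  apply mul_left_cancel₀ succ_ne_zero
  linear_combination 4 * catalan_eq + 2 * centralBinom_succ

theorem summable_catalan_div_four_pow : Summable fun n => (catalan n : ℝ) / 4 ^ n := by
  refine summable_of_sum_range_le (c := 2) (fun n => by positivity) fun n => ?_
  have last_nonneg : (0 : ℝ) ≤ n.centralBinom / 4 ^ n := by positivity
  simp_rw [catalan_div_four_pow]
  rw [← Finset.mul_sum, Finset.sum_range_sub', Nat.centralBinom_zero, pow_zero, Nat.cast_one]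
  linarith

section SqrtOneSubFourMul

variable {A B : Type*} [CommRing A] [CommRing B]

/-- The power series `√(1 - 4cX)`, which makes sense over every commutative ring through the
Catalan generating function. -/
def sqrtOneSubFourMul (c : A) : A⟦X⟧ :=
  1 - C (2 * c) * (X * rescale c (catalanSeries.map (Nat.castRingHom A)))

theorem sqrtOneSubFourMul_sq (c : A) : sqrtOneSubFourMul c ^ 2 = 1 - C (4 * c) * X := by
  have catalan_eq := congrArg (fun P => rescale c (P.map (Nat.castRingHom A)))
    catalanSeries_sq_mul_X_add_one
  simp only [map_add, map_mul, map_pow, map_one, map_X, rescale_X] at catalan_eq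
  simp only [sqrtOneSubFourMul, map_mul, map_ofNat]
  linear_combination 4 * C c * X * catalan_eq

theorem constantCoeff_sqrtOneSubFourMul (c : A) : constantCoeff (sqrtOneSubFourMul c) = 1 := by
  simp [sqrtOneSubFourMul]

theorem map_sqrtOneSubFourMul (f : A →+* B) (c : A) :
    (sqrtOneSubFourMul c).map f = sqrtOneSubFourMul (f c) := by
  have map_catalan : (catalanSeries.map (Nat.castRingHom A)).map f
      = catalanSeries.map (Nat.castRingHom B) := by
    ext n
    simp
  simp [sqrtOneSubFourMul, ← rescale_map, map_catalan, map_ofNat f]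

end SqrtOneSubFourMul

theorem exists_hasValueAtOne_sqrtOneSubFourMul {c : ℂ} (hc : ‖c‖ ≤ 1 / 4) :
    ∃ v, HasValueAtOne (sqrtOneSubFourMul c) v ∧ v ^ 2 = 1 - 4 * c := by
  have summable_norm : Summable fun n =>
      ‖coeff n (rescale c (catalanSeries.map (Nat.castRingHom ℂ)))‖ := by
    refine summable_catalan_div_four_pow.of_nonneg_of_le (fun _ => norm_nonneg _) fun n => ?_
    have norm_pow_le := pow_le_pow_left₀ (norm_nonneg c) hc n
    rw [one_div_pow] at norm_pow_le
    simpa [coeff_rescale, div_eq_mul_inv, mul_comm] using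
      mul_le_mul_of_nonneg_left norm_pow_le (Nat.cast_nonneg (catalan n))
  have value := hasValueAtOne_one.sub ((hasValueAtOne_C (2 * c)).mul
    (hasValueAtOne_X.mul ⟨summable_norm, summable_norm.of_norm.hasSum⟩))
  refine ⟨_, value, ?_⟩
  have value_sq := value.mul value
  rw [← sqrtOneSubFourMul, ← sq, ← sq, sqrtOneSubFourMul_sq] at value_sq
  simpa using value_sq.unique (hasValueAtOne_one.sub ((hasValueAtOne_C _).mul hasValueAtOne_X))

/-- If `η` is a root of unit modulus of `1 - 2cX + X²`, the series is `√(1 - ηX) √(1 - η⁻¹X)`; its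
value at `1` is a squared modulus, which picks the sign of the square root. -/
theorem exists_sqrt_one_sub_two_mul_add_sq {c : ℝ} (hc : |c| ≤ 1) :
    ∃ E : ℂ⟦X⟧, constantCoeff E = 1 ∧ E ^ 2 = 1 - 2 * C (c : ℂ) * X + X ^ 2 ∧
      HasValueAtOne E √(2 - 2 * c) := by
  set η : ℂ := ⟨c, √(1 - c ^ 2)⟩ with hη
  have sqrt_sq : √(1 - c ^ 2) ^ 2 = 1 - c ^ 2 :=
    Real.sq_sqrt (sub_nonneg.mpr ((sq_le_one_iff_abs_le_one c).mpr hc))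
  have η_mul_conj : η * starRingEnd ℂ η = 1 := by
    rw [Complex.mul_conj, Complex.normSq_mk]
    exact_mod_cast by linear_combination sqrt_sq
  have η_add_conj : η + starRingEnd ℂ η = 2 * c := by
    simp [Complex.add_conj, hη]
  have norm_η : ‖η‖ = 1 := by
    rw [Complex.norm_def, Complex.normSq_mk, ← sq, ← sq, sqrt_sq]
    simp
  have norm_one_sub : ‖1 - η‖ = √(2 - 2 * c) := by
    rw [Complex.norm_def, Complex.normSq_apply]
    congr 1
    simp only [hη, Complex.sub_re, Complex.sub_im, Complex.one_re, Complex.one_im]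
    linear_combination sqrt_sq
  obtain ⟨v, hv, hv_sq⟩ :=
    exists_hasValueAtOne_sqrtOneSubFourMul (c := η / 4) (by simp [norm_η])
  have v_mul_conj : v * starRingEnd ℂ v = (√(2 - 2 * c) : ℝ) := by
    rw [Complex.mul_conj, Complex.normSq_eq_norm_sq, ← norm_pow, hv_sq, ← norm_one_sub]
    ring_nf
  refine ⟨sqrtOneSubFourMul (η / 4) * (sqrtOneSubFourMul (η / 4)).map (starRingEnd ℂ), ?_, ?_, ?_⟩
  · simp [map_sqrtOneSubFourMul, constantCoeff_sqrtOneSubFourMul]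
  · have C_mul := congrArg (C (R := ℂ)) η_mul_conj
    have C_add := congrArg (C (R := ℂ)) η_add_conj
    simp only [map_mul, map_add, map_one, map_ofNat] at C_mul C_add
    rw [mul_pow, ← map_pow, sqrtOneSubFourMul_sq, mul_div_cancel₀ η (by norm_num)]
    simp only [map_sub, map_mul, map_one, map_C, map_X]
    linear_combination X ^ 2 * C_mul - X * C_add
  · simpa only [v_mul_conj] using hv.mul hv.map_conj

section GeneratingFunctions

variable {K : Type*} [Field K]

theorem exists_root_of_sq_eq_discrim (h2 : (2 : K) ≠ 0) (b : K) {D : K⟦X⟧}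
    (hD : constantCoeff D = 1) (hD_sq : D ^ 2 = (1 - X ^ 2) ^ 2 + 4 * C b ^ 2 * X ^ 2) :
    ∃ U : K⟦X⟧, constantCoeff U = 0 ∧ 2 * C b * U = 1 - X ^ 2 - D ∧
      C b * U ^ 2 = (1 - X ^ 2) * U + C b * X ^ 2 := by
  have inv_mul := PowerSeries.inv_mul_cancel (1 - X ^ 2 + D)
    (by simpa [hD, one_add_one_eq_two] using h2)
  set V := (1 - X ^ 2 + D)⁻¹
  have linear : 2 * C b * (-2 * C b * X ^ 2 * V) = 1 - X ^ 2 - D := by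
    linear_combination V * hD_sq + (1 - X ^ 2 - D) * inv_mul
  refine ⟨-2 * C b * X ^ 2 * V, by simp, linear, ?_⟩
  linear_combination (-C b * X ^ 2 * V) * linear + C b * X ^ 2 * inv_mul

theorem one_sub_X_sq_mul_inv_one_sub {b : K} {D U : K⟦X⟧} (hU₀ : constantCoeff U = 0)
    (hU_lin : 2 * C b * U = 1 - X ^ 2 - D)
    (hU : C b * U ^ 2 = (1 - X ^ 2) * U + C b * X ^ 2) :
    (1 - X ^ 2) * (C (2 * (1 - b)) * (1 - U)⁻¹) = D - X ^ 2 - C (2 * b - 1) := by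
  have mul_inv := PowerSeries.mul_inv_cancel (1 - U) (by simp [hU₀])
  simp only [map_sub, map_mul, map_one, map_ofNat]
  linear_combination 2 * (1 - X ^ 2 - C b - C b * U) * mul_inv - 2 * (1 - U)⁻¹ * hU - hU_lin

end GeneratingFunctions

section Walk

variable (a b s : ℝ)

theorem psi_succ_fst (t x : ℕ) :
    (psi a b s (t + 1) x).1 = a * (psi a b s t (x + 1)).1 - b * (psi a b s t (x + 1)).2 := by
  rw [psi]

theorem psi_succ_snd_zero (t : ℕ) : (psi a b s (t + 1) 0).2 = 0 := by
  simp [psi]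

theorem psi_succ_snd_one (t : ℕ) : (psi a b s (t + 1) (0 + 1)).2 = s * (psi a b s t 0).1 := by
  simp [psi]

theorem psi_succ_snd_add_two (t x : ℕ) :
    (psi a b s (t + 1) (x + 2)).2 = b * (psi a b s t (x + 1)).1 + a * (psi a b s t (x + 1)).2 := by
  simp [psi]

variable {a b s}

/-- Last-passage decomposition: `G` generates the returns to the origin, `M` the passages from one
vertex to the next and `U` the excursions to the right of a vertex. -/
theorem psi_eq_coeff {U M G : ℂ⟦X⟧} (hU : U = C (a : ℂ) * X * (U * M) - C (b : ℂ) * X ^ 2)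
    (hM : M = C (a : ℂ) * X + C (b : ℂ) * (U * M)) (hG : G = 1 + C (s : ℂ) * (U * G)) (t x : ℕ) :
    (psi a b s t x).1 = coeff t ((if x = 0 then 1 else 0) + C (s : ℂ) * (U * M ^ x * G)) ∧
    (psi a b s t (x + 1)).2 = coeff t (C (s : ℂ) * (X * (M ^ x * G))) := by
  induction t generalizing x with
  | zero =>
    have hU₀ : constantCoeff U = 0 := by
      rw [hU]
      simp
    split_ifs with hx <;> simp [psi, hx, hU₀]
  | succ t ih =>
    refine ⟨?_, ?_⟩
    · have left_eq : C (s : ℂ) * (U * M ^ x * G)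
          = X * (C (a : ℂ) * (C (s : ℂ) * (U * M ^ (x + 1) * G))
            - C (b : ℂ) * (C (s : ℂ) * (X * (M ^ x * G)))) := by
        linear_combination C (s : ℂ) * M ^ x * G * hU
      have coeff_delta : coeff (t + 1) (if x = 0 then (1 : ℂ⟦X⟧) else 0) = 0 := by
        split_ifs <;> simp [coeff_one]
      rw [psi_succ_fst, (ih (x + 1)).1, (ih x).2, map_add (coeff (t + 1)), coeff_delta, left_eq,
        coeff_succ_X_mul]
      simp
    · rcases x with _ | x
      · rw [psi_succ_snd_one, (ih 0).1, mul_left_comm (C (s : ℂ)) X,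
          coeff_succ_X_mul, coeff_C_mul]
        simp only [if_true, pow_zero, mul_one, one_mul, ← hG]
      · have right_eq : C (s : ℂ) * (X * (M ^ (x + 1) * G))
            = X * (C (b : ℂ) * (C (s : ℂ) * (U * M ^ (x + 1) * G))
              + C (a : ℂ) * (C (s : ℂ) * (X * (M ^ x * G)))) := by
          linear_combination C (s : ℂ) * X * M ^ x * G * hM
        rw [psi_succ_snd_add_two, (ih (x + 1)).1, (ih x).2, right_eq, coeff_succ_X_mul]
        simp

theorem psi_zero_fst_eq_coeff_inv (hab : a ^ 2 + b ^ 2 = 1) {U : ℂ⟦X⟧}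
    (hU₀ : constantCoeff U = 0)
    (hU : C (b : ℂ) * U ^ 2 = (1 - X ^ 2) * U + C (b : ℂ) * X ^ 2) (t : ℕ) :
    (psi a b s t 0).1 = coeff t (1 - C (s : ℂ) * U)⁻¹ := by
  have mul_inv_b := PowerSeries.mul_inv_cancel (1 - C (b : ℂ) * U) (by simp [hU₀])
  have mul_inv_s := PowerSeries.mul_inv_cancel (1 - C (s : ℂ) * U) (by simp [hU₀])
  set G := (1 - C (s : ℂ) * U)⁻¹
  set W := (1 - C (b : ℂ) * U)⁻¹
  have hab_C : C (a : ℂ) ^ 2 + C (b : ℂ) ^ 2 = 1 := by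
    rw [← map_pow, ← map_pow, ← map_add, ← map_one C]
    exact_mod_cast congrArg (fun r : ℝ => C (r : ℂ)) hab
  have hG : G = 1 + C (s : ℂ) * (U * G) := by linear_combination mul_inv_s
  have hM : C (a : ℂ) * X * W
      = C (a : ℂ) * X + C (b : ℂ) * (U * (C (a : ℂ) * X * W)) := by
    linear_combination C (a : ℂ) * X * mul_inv_b
  have hU_rec : U = C (a : ℂ) * X * (U * (C (a : ℂ) * X * W)) - C (b : ℂ) * X ^ 2 := by
    linear_combination (-W) * hU - (U + C (b : ℂ) * X ^ 2) * mul_inv_b - X ^ 2 * U * W * hab_C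
  rw [(psi_eq_coeff hU_rec hM hG t 0).1]
  simp [← hG]

theorem tendsto_psi_of_tendsto_psi_zero_fst (ha : a ≠ 0)
    (h₀ : Tendsto (fun t => (psi a b s t 0).1) atTop (𝓝 0)) (x : ℕ) :
    Tendsto (fun t => (psi a b s t x).1) atTop (𝓝 0) ∧
    Tendsto (fun t => (psi a b s t x).2) atTop (𝓝 0) := by
  induction x with
  | zero =>
    refine ⟨h₀, (tendsto_add_atTop_iff_nat 1).mp ?_⟩
    simp only [psi_succ_snd_zero, tendsto_const_nhds]
  | succ x ih =>
    have right : Tendsto (fun t => (psi a b s t (x + 1)).2) atTop (𝓝 0) := by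
      rw [← tendsto_add_atTop_iff_nat 1]
      rcases x with _ | x
      · simpa only [psi_succ_snd_one, mul_zero] using h₀.const_mul (s : ℂ)
      · simpa only [psi_succ_snd_add_two, mul_zero, add_zero] using
          (ih.1.const_mul (b : ℂ)).add (ih.2.const_mul (a : ℂ))
    have left_eq (t : ℕ) : (psi a b s t (x + 1)).1
        = (a : ℂ)⁻¹ * ((psi a b s (t + 1) x).1 + b * (psi a b s t (x + 1)).2) := by
      have a_ne_zero : (a : ℂ) ≠ 0 := by exact_mod_cast ha
      rw [psi_succ_fst, sub_add_cancel, inv_mul_cancel_left₀ a_ne_zero]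
    refine ⟨?_, right⟩
    simpa only [left_eq, mul_zero, add_zero] using
      (((tendsto_add_atTop_iff_nat 1).mpr ih.1).add (right.const_mul (b : ℂ))).const_mul (a : ℂ)⁻¹

theorem tendsto_psi_zero_fst (hb₀ : 0 ≤ b) (hb₁ : b < 1) (hab : a ^ 2 + b ^ 2 = 1) :
    Tendsto (fun t => (psi a b 1 t 0).1) atTop (𝓝 0) := by
  have abs_le_one : |1 - 2 * b ^ 2| ≤ 1 := abs_le.mpr ⟨by nlinarith, by nlinarith⟩
  obtain ⟨E, hE₀, hE_sq, hE⟩ := exists_sqrt_one_sub_two_mul_add_sq abs_le_one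
  have value_eq : √(2 - 2 * (1 - 2 * b ^ 2)) = 2 * b := by
    rw [← Real.sqrt_sq (by positivity : 0 ≤ 2 * b)]
    ring_nf
  have expand_sq : expand 2 two_ne_zero E ^ 2
      = (1 - X ^ 2) ^ 2 + 4 * C (b : ℂ) ^ 2 * X ^ 2 := by
    rw [← map_pow, hE_sq]
    simp only [Complex.ofReal_sub, Complex.ofReal_mul, Complex.ofReal_pow, Complex.ofReal_one,
      Complex.ofReal_ofNat, map_add, map_sub, map_mul, map_pow, map_one, map_ofNat, expand_X,
      expand_C]
    ring
  obtain ⟨U, hU₀, hU_lin, hU⟩ :=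
    exists_root_of_sq_eq_discrim two_ne_zero (b : ℂ) (by simpa using hE₀) expand_sq
  have remainder : HasValueAtOne (E - X - C (2 * b - 1 : ℂ)) 0 := by
    convert! (hE.sub hasValueAtOne_X).sub (hasValueAtOne_C (2 * b - 1 : ℂ)) using 1
    rw [value_eq]
    push_cast
    ring
  have scaled := tendsto_coeff_of_one_sub_X_pow_mul_eq_expand two_ne_zero
    (by simpa only [map_sub, expand_X, expand_C] using
      one_sub_X_sq_mul_inv_one_sub hU₀ hU_lin hU) remainder
  have scale_ne_zero : (2 * (1 - b) : ℂ) ≠ 0 :=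
    mul_ne_zero two_ne_zero (sub_ne_zero.mpr (by exact_mod_cast hb₁.ne'))
  have origin_eq (t : ℕ) : (psi a b 1 t 0).1 = coeff t (1 - U)⁻¹ := by
    simpa using psi_zero_fst_eq_coeff_inv (s := 1) hab hU₀ hU t
  simpa only [origin_eq, coeff_C_mul, inv_mul_cancel_left₀ scale_ne_zero, mul_zero] using
    scaled.const_mul (2 * (1 - b) : ℂ)⁻¹

end Walk

theorem half_line_caseA_amplitudes_vanish_general {a b : ℝ} (hb₀ : 0 ≤ b) (hb₁ : b < 1)
    (hab : a ^ 2 + b ^ 2 = 1) (x : ℕ) :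
    Tendsto (fun t => (psi a b 1 t x).1) atTop (𝓝 0) ∧
    Tendsto (fun t => (psi a b 1 t x).2) atTop (𝓝 0) := by
  have a_ne_zero : a ≠ 0 := by
    rintro rfl
    nlinarith
  exact tendsto_psi_of_tendsto_psi_zero_fst a_ne_zero (tendsto_psi_zero_fst hb₀ hb₁ hab) x

/-- In Case (A) (`s = +1`) the amplitudes vanish pointwise: for every
`x ∈ ℤ₊`, `lim_{t→∞} Ψ_t^L(x) = 0` and `lim_{t→∞} Ψ_t^R(x) = 0`. -/
theorem half_line_caseA_amplitudes_vanish
    (κ : ℕ) (hκ : 3 ≤ κ) (a b : ℝ)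
    (ha : a = 2 * Real.sqrt ((κ : ℝ) - 1) / κ) (hb : b = ((κ : ℝ) - 2) / κ)
    (x : ℕ) :
    Tendsto (fun t : ℕ => (psi a b 1 t x).1) atTop (𝓝 0) ∧
    Tendsto (fun t : ℕ => (psi a b 1 t x).2) atTop (𝓝 0) := by
  have three_le : (3 : ℝ) ≤ κ := by exact_mod_cast hκ
  have hb₀ : 0 ≤ b := hb ▸ div_nonneg (by linarith) (by linarith)
  have hb₁ : b < 1 := by
    rw [hb, div_lt_one (by linarith)]
    linarith
  have hab : a ^ 2 + b ^ 2 = 1 := by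
    rw [ha, hb, div_pow, div_pow, mul_pow, Real.sq_sqrt (by linarith)]
    field_simp
    ring
  exact half_line_caseA_amplitudes_vanish_general hb₀ hb₁ hab x

end
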